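/- arXiv:0704.3091 — 3 statements merged into one kernel-verified Lean document; each statement's English description precedes it below -/
import Mathlib

section
/- Each of the four numbers a, b, c, d is a root of the polynomial 45x⁸ − 90x⁶ + 60x⁴ − 15x² + 1, i.e. 45a⁸ − 90a⁶ + 60a⁴ − 15a² + 1 = 0, and similarly for b, c, and d. -/
noncomputable section
open Real Complex

namespace Triacontagonal

/-- The golden ratio. -/
def τ : ℝ := (1 + Real.sqrt 5) / 2

/-- The constant 3^(-1/2) * 5^(-1/4). -/
def k0 : ℝ := (3 : ℝ) ^ (-(1:ℝ)/2) * (5 : ℝ) ^ (-(1:ℝ)/4)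

/-- `a` is the positive real with 2a² = 1 + 3^(-1/2)·5^(-1/4)·τ^(3/2). -/
def a : ℝ := Real.sqrt ((1 + k0 * τ ^ ((3:ℝ)/2)) / 2)

/-- `b` is the positive real with 2b² = 1 + 3^(-1/2)·5^(-1/4)·τ^(-3/2). -/
def b : ℝ := Real.sqrt ((1 + k0 * τ ^ (-((3:ℝ)/2))) / 2)

/-- `c` is the positive real with 2c² = 1 - 3^(-1/2)·5^(-1/4)·τ^(-3/2). -/
def c : ℝ := Real.sqrt ((1 - k0 * τ ^ (-((3:ℝ)/2))) / 2)

/-- `d` is the positive real with 2d² = 1 - 3^(-1/2)·5^(-1/4)·τ^(3/2). -/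
def d : ℝ := Real.sqrt ((1 - k0 * τ ^ ((3:ℝ)/2)) / 2)

theorem aux_root (u : ℝ) (hu : 45 * (u ^ 2) ^ 2 - 30 * u ^ 2 + 1 = 0) :
    45 * (Real.sqrt ((1 + u) / 2)) ^ 8 - 90 * (Real.sqrt ((1 + u) / 2)) ^ 6
      + 60 * (Real.sqrt ((1 + u) / 2)) ^ 4 - 15 * (Real.sqrt ((1 + u) / 2)) ^ 2 + 1 = 0 := by
  have h1 : u ^ 2 ≤ 1 := by nlinarith
  have h2 : 0 ≤ (1 + u) / 2 := by nlinarith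
  have h3 := Real.sq_sqrt h2
  generalize Real.sqrt ((1 + u) / 2) = x at *
  have e : 45 * x ^ 8 - 90 * x ^ 6 + 60 * x ^ 4 - 15 * x ^ 2 + 1
      = 45 * (x ^ 2) ^ 4 - 90 * (x ^ 2) ^ 3 + 60 * (x ^ 2) ^ 2 - 15 * x ^ 2 + 1 := by ring
  rw [e, h3]
  linear_combination hu / 16

theorem aux_k0 : k0 ^ 2 = Real.sqrt 5 / 15 := by
  have h5 : Real.sqrt 5 ^ 2 = 5 := Real.sq_sqrt (by norm_num)
  have hp : 0 < Real.sqrt 5 := by positivity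
  have e1 : ((3 : ℝ) ^ (-(1:ℝ)/2)) ^ 2 = 3⁻¹ := by
    rw [← Real.rpow_natCast, ← Real.rpow_mul (by norm_num), ← Real.rpow_neg_one]
    norm_num
  have e2 : ((5 : ℝ) ^ (-(1:ℝ)/4)) ^ 2 = (Real.sqrt 5)⁻¹ := by
    rw [← Real.rpow_natCast, ← Real.rpow_mul (by norm_num), Real.sqrt_eq_rpow,
      ← Real.rpow_neg (by norm_num)]
    norm_num
  unfold k0
  rw [mul_pow, e1, e2]
  field_simp
  linarith

theorem aux_tau_pos : 0 < τ := by unfold τ; positivity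

theorem aux_tau3 : τ ^ 3 = 2 + Real.sqrt 5 := by
  have h5 : Real.sqrt 5 ^ 2 = 5 := Real.sq_sqrt (by norm_num)
  unfold τ
  linear_combination (Real.sqrt 5 + 3) / 8 * h5

theorem aux_pos : (τ ^ ((3:ℝ)/2)) ^ 2 = 2 + Real.sqrt 5 := by
  rw [← aux_tau3, ← Real.rpow_natCast, ← Real.rpow_mul aux_tau_pos.le, ← Real.rpow_natCast]
  norm_num

theorem aux_neg : (τ ^ (-((3:ℝ)/2))) ^ 2 = Real.sqrt 5 - 2 := by
  have h5 : Real.sqrt 5 ^ 2 = 5 := Real.sq_sqrt (by norm_num)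
  rw [Real.rpow_neg aux_tau_pos.le, inv_pow, aux_pos]
  have : 2 + Real.sqrt 5 ≠ 0 := by positivity
  field_simp
  linarith

/-- each of a, b, c, d is a root of 45x⁸ − 90x⁶ + 60x⁴ − 15x² + 1. -/
theorem stmt0 :
    45 * a ^ 8 - 90 * a ^ 6 + 60 * a ^ 4 - 15 * a ^ 2 + 1 = 0 ∧
    45 * b ^ 8 - 90 * b ^ 6 + 60 * b ^ 4 - 15 * b ^ 2 + 1 = 0 ∧
    45 * c ^ 8 - 90 * c ^ 6 + 60 * c ^ 4 - 15 * c ^ 2 + 1 = 0 ∧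
    45 * d ^ 8 - 90 * d ^ 6 + 60 * d ^ 4 - 15 * d ^ 2 + 1 = 0 := by
  have h5 : Real.sqrt 5 ^ 2 = 5 := Real.sq_sqrt (by norm_num)
  have hp : 45 * ((k0 * τ ^ ((3:ℝ)/2)) ^ 2) ^ 2 - 30 * (k0 * τ ^ ((3:ℝ)/2)) ^ 2 + 1 = 0 := by
    have e : (k0 * τ ^ ((3:ℝ)/2)) ^ 2 = (5 + 2 * Real.sqrt 5) / 15 := by
      rw [mul_pow, aux_k0, aux_pos]; linear_combination h5 / 15
    rw [e]; linear_combination 4 / 5 * h5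
  have hn : 45 * ((k0 * τ ^ (-((3:ℝ)/2))) ^ 2) ^ 2 - 30 * (k0 * τ ^ (-((3:ℝ)/2))) ^ 2 + 1 = 0 := by
    have e : (k0 * τ ^ (-((3:ℝ)/2))) ^ 2 = (5 - 2 * Real.sqrt 5) / 15 := by
      rw [mul_pow, aux_k0, aux_neg]; linear_combination h5 / 15
    rw [e]; linear_combination 4 / 5 * h5
  refine ⟨aux_root _ hp, aux_root _ hn, ?_, ?_⟩
  · unfold c
    rw [sub_eq_add_neg 1 (k0 * _)]
    exact aux_root _ (by rw [neg_sq]; exact hn)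
  · unfold d
    rw [sub_eq_add_neg 1 (k0 * _)]
    exact aux_root _ (by rw [neg_sq]; exact hp)

end Triacontagonal
end
end

section
/- Every one of the 240 vectors Aₙ, Bₙ, Cₙ, Dₙ, Eₙ, Fₙ, Gₙ, Hₙ (n ∈ {0,…,29}) has Euclidean norm equal to 1 in ℂ⁴. -/
noncomputable section
open Real Complex

namespace Triacontagonal

/-- `cc n = 2 cos(nπ/30)`. -/
def cc (n : ℤ) : ℝ := 2 * Real.cos (n * Real.pi / 30)

/-- `ω = exp(iπ/30)`, a primitive 60th root of unity. -/
def ω : ℂ := Complex.exp (Real.pi * Complex.I / 30)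

def r1 : ℝ := a / cc 9
def r2 : ℝ := b / cc 9
def r3 : ℝ := c / cc 9
def r4 : ℝ := d / cc 9
def r5 : ℝ := a / cc 3
def r6 : ℝ := b / cc 3
def r7 : ℝ := c / cc 3
def r8 : ℝ := d / cc 3

/-- The eight cycles of 30 vectors each in ℂ⁴. -/
def A (n : Fin 30) : Fin 4 → ℂ :=
  ![(r1 : ℂ) * ω ^ (2 * (n : ℕ)), (r4 : ℂ) * ω ^ (22 * (n : ℕ)),
    (r6 : ℂ) * ω ^ (14 * (n : ℕ) + 1), (r7 : ℂ) * ω ^ (26 * (n : ℕ) + 1)]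

def B (n : Fin 30) : Fin 4 → ℂ :=
  ![(r2 : ℂ) * ω ^ (2 * (n : ℕ) + 29), (r3 : ℂ) * ω ^ (22 * (n : ℕ) + 19),
    -((r8 : ℂ) * ω ^ (14 * (n : ℕ) + 24)), -((r5 : ℂ) * ω ^ (26 * (n : ℕ) + 18))]

def C (n : Fin 30) : Fin 4 → ℂ :=
  ![(r3 : ℂ) * ω ^ (2 * (n : ℕ) + 29), -((r2 : ℂ) * ω ^ (22 * (n : ℕ) + 19)),
    (r5 : ℂ) * ω ^ (14 * (n : ℕ) + 24), -((r8 : ℂ) * ω ^ (26 * (n : ℕ) + 18))]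

def D (n : Fin 30) : Fin 4 → ℂ :=
  ![(r4 : ℂ) * ω ^ (2 * (n : ℕ)), -((r1 : ℂ) * ω ^ (22 * (n : ℕ))),
    (r7 : ℂ) * ω ^ (14 * (n : ℕ) + 1), -((r6 : ℂ) * ω ^ (26 * (n : ℕ) + 1))]

def E (n : Fin 30) : Fin 4 → ℂ :=
  ![(r5 : ℂ) * ω ^ (2 * (n : ℕ)), (r8 : ℂ) * ω ^ (22 * (n : ℕ)),
    -((r2 : ℂ) * ω ^ (14 * (n : ℕ) + 1)), -((r3 : ℂ) * ω ^ (26 * (n : ℕ) + 1))]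

def F (n : Fin 30) : Fin 4 → ℂ :=
  ![(r6 : ℂ) * ω ^ (2 * (n : ℕ) + 29), (r7 : ℂ) * ω ^ (22 * (n : ℕ) + 19),
    (r4 : ℂ) * ω ^ (14 * (n : ℕ) + 24), (r1 : ℂ) * ω ^ (26 * (n : ℕ) + 18)]

def G (n : Fin 30) : Fin 4 → ℂ :=
  ![(r7 : ℂ) * ω ^ (2 * (n : ℕ) + 29), -((r6 : ℂ) * ω ^ (22 * (n : ℕ) + 19)),
    -((r1 : ℂ) * ω ^ (14 * (n : ℕ) + 24)), (r4 : ℂ) * ω ^ (26 * (n : ℕ) + 18)]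

def H (n : Fin 30) : Fin 4 → ℂ :=
  ![(r8 : ℂ) * ω ^ (2 * (n : ℕ)), -((r5 : ℂ) * ω ^ (22 * (n : ℕ))),
    -((r3 : ℂ) * ω ^ (14 * (n : ℕ) + 1)), (r2 : ℂ) * ω ^ (26 * (n : ℕ) + 1)]

/-- The set of the 240 vectors. -/
def S : Set (Fin 4 → ℂ) :=
  {v | ∃ n : Fin 30, v = A n ∨ v = B n ∨ v = C n ∨ v = D n ∨
    v = E n ∨ v = F n ∨ v = G n ∨ v = H n}

/-- The real inner product on ℂ⁴: ⟨v,w⟩_ℝ = Re(Σᵢ vᵢ · conj(wᵢ)). -/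
def rinner (v w : Fin 4 → ℂ) : ℝ := (∑ i, v i * star (w i)).re

/-- The associated Euclidean norm. -/
def enorm (v : Fin 4 → ℂ) : ℝ := Real.sqrt (rinner v v)

lemma tau_gt : 1 < τ := by
  have : (1:ℝ) < Real.sqrt 5 := by
    rw [Real.lt_sqrt] <;> norm_num
  unfold τ; linarith

lemma k0_pos : 0 < k0 := by unfold k0; positivity

lemma k0_sq : k0 ^ 2 = 1 / (3 * Real.sqrt 5) := by
  unfold k0
  rw [mul_pow, ← Real.rpow_natCast, ← Real.rpow_natCast, ← Real.rpow_mul (by norm_num),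
    ← Real.rpow_mul (by norm_num), Real.sqrt_eq_rpow]
  have h1 : (-(1:ℝ)/2 * ((2:ℕ):ℝ)) = -1 := by norm_num
  have h2 : (-(1:ℝ)/4 * ((2:ℕ):ℝ)) = -(1/2) := by norm_num
  rw [h1, h2, Real.rpow_neg (by norm_num), Real.rpow_neg (by norm_num), Real.rpow_one]
  rw [one_div (3 * _), mul_inv]

lemma x_le : k0 * τ ^ ((3:ℝ)/2) ≤ 1 := by
  have ht := tau_gt
  have h : (k0 * τ ^ ((3:ℝ)/2)) ^ 2 ≤ 1 := by
    rw [mul_pow, k0_sq, ← Real.rpow_natCast, ← Real.rpow_mul (by linarith)]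
    have h1 : ((3:ℝ)/2 * ((2:ℕ):ℝ)) = ((3:ℕ):ℝ) := by norm_num
    rw [h1, Real.rpow_natCast]
    have h5 : Real.sqrt 5 ^ 2 = 5 := Real.sq_sqrt (by norm_num)
    have hp : 1 < Real.sqrt 5 := by rw [Real.lt_sqrt] <;> norm_num
    have h3 : τ ^ 3 = 2 + Real.sqrt 5 := by
      unfold τ
      have : Real.sqrt 5 ^ 3 = 5 * Real.sqrt 5 := by rw [pow_succ, h5]
      ring_nf
      rw [this, h5]; ring
    rw [h3, one_div, inv_mul_le_iff₀ (by positivity)]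
    linarith
  have h0 : 0 ≤ k0 * τ ^ ((3:ℝ)/2) := by
    have := k0_pos
    positivity
  nlinarith

lemma y_le : k0 * τ ^ (-((3:ℝ)/2)) ≤ 1 := by
  refine le_trans ?_ x_le
  apply mul_le_mul_of_nonneg_left _ k0_pos.le
  exact Real.rpow_le_rpow_of_exponent_le tau_gt.le (by norm_num)

lemma ad : a ^ 2 + d ^ 2 = 1 := by
  have h0 : 0 ≤ k0 * τ ^ ((3:ℝ)/2) := by
    have := k0_pos
    have := tau_gt
    positivity
  have := x_le
  unfold a d
  rw [Real.sq_sqrt (by linarith), Real.sq_sqrt (by linarith)]; ring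

lemma bc : b ^ 2 + c ^ 2 = 1 := by
  have h0 : 0 ≤ k0 * τ ^ (-((3:ℝ)/2)) := by
    have := k0_pos
    have := tau_gt
    positivity
  have := y_le
  unfold b c
  rw [Real.sq_sqrt (by linarith), Real.sq_sqrt (by linarith)]; ring

lemma cc_sum : 1 / cc 9 ^ 2 + 1 / cc 3 ^ 2 = 1 := by
  have h5 : Real.sqrt 5 ^ 2 = 5 := Real.sq_sqrt (by norm_num)
  have hp : 1 < Real.sqrt 5 := by rw [Real.lt_sqrt] <;> norm_num
  have hq : Real.sqrt 5 < 3 := by rw [Real.sqrt_lt'] <;> norm_num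
  have h36 := Real.cos_pi_div_five
  have h3 : cc 3 ^ 2 = (5 + Real.sqrt 5) / 2 := by
    have e : Real.pi / 5 = 2 * (((3:ℤ):ℝ) * Real.pi / 30) := by push_cast; ring
    rw [e, Real.cos_two_mul] at h36
    unfold cc
    linarith
  have h9 : cc 9 ^ 2 = (5 - Real.sqrt 5) / 2 := by
    have e : (((9:ℤ):ℝ) * Real.pi / 30) = Real.pi / 2 - Real.pi / 5 := by push_cast; ring
    unfold cc
    rw [e, Real.cos_pi_div_two_sub, mul_pow, Real.sin_sq, h36]
    linarith
  rw [h3, h9]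
  have : 5 - Real.sqrt 5 ≠ 0 := by linarith
  have : 5 + Real.sqrt 5 ≠ 0 := by linarith
  field_simp
  linarith

lemma omega_sq (n : ℕ) : Complex.normSq (ω ^ n) = 1 := by
  have : ‖ω‖ = 1 := by
    have e : ω = Complex.exp (((Real.pi / 30 : ℝ) : ℂ) * Complex.I) := by
      unfold ω; congr 1; push_cast; ring
    rw [e, Complex.norm_exp_ofReal_mul_I]
  rw [Complex.normSq_eq_norm_sq, norm_pow, this]; simp

lemma rinner_eq (v : Fin 4 → ℂ) : rinner v v = Complex.normSq (v 0) + Complex.normSq (v 1)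
    + Complex.normSq (v 2) + Complex.normSq (v 3) := by
  unfold rinner
  simp [Fin.sum_univ_four, Complex.normSq_apply]

lemma sums : (r1 ^ 2 + r4 ^ 2 + r6 ^ 2 + r7 ^ 2 = 1) ∧ (r2 ^ 2 + r3 ^ 2 + r5 ^ 2 + r8 ^ 2 = 1) := by
  have h := cc_sum
  have h1 := ad
  have h2 := bc
  unfold r1 r2 r3 r4 r5 r6 r7 r8
  simp only [div_pow]
  constructor
  · rw [← add_div, h1, add_assoc, ← add_div, h2, h]
  · rw [← add_div, h2, add_assoc, ← add_div, h1, h]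

/-- every one of the 240 vectors has Euclidean norm 1. -/
theorem stmt5 : ∀ v ∈ S, enorm v = 1 := by
  rintro v ⟨n, hv⟩
  obtain ⟨h1, h2⟩ := sums
  unfold enorm
  rw [Real.sqrt_eq_one, rinner_eq]
  rcases hv with rfl | rfl | rfl | rfl | rfl | rfl | rfl | rfl <;>
    simp only [A, B, C, D, E, F, G, H, Matrix.cons_val, Complex.normSq_neg, Complex.normSq_mul,
      omega_sq, Complex.normSq_ofReal] <;> linarith

end Triacontagonal
end
end

section
/- The set S is closed under negation: if v ∈ S then −v ∈ S. -/
noncomputable section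
open Real Complex

namespace Triacontagonal

theorem omega_pow_30 : ω ^ 30 = -1 := by
  rw [ω, ← Complex.exp_nat_mul, ← Complex.exp_pi_mul_I]
  congr 1
  push_cast
  ring

theorem omega_shift (n : Fin 30) : ∃ m : Fin 30, ω ^ (2 * (m : ℕ)) = -ω ^ (2 * (n : ℕ)) := by
  by_cases h : (n : ℕ) < 15
  · refine ⟨⟨n + 15, by omega⟩, ?_⟩
    have e : 2 * ((n : ℕ) + 15) = 2 * (n : ℕ) + 30 := by ring
    simp only [e, pow_add, omega_pow_30]
    ring
  · refine ⟨⟨n - 15, by omega⟩, ?_⟩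
    have e : 2 * (n : ℕ) = 2 * ((n : ℕ) - 15) + 30 := by omega
    rw [e, pow_add, omega_pow_30]
    ring

/-- S is closed under negation. -/
theorem stmt7 : ∀ v ∈ S, -v ∈ S := by
  rintro v ⟨n, hv⟩
  obtain ⟨m, h2⟩ := omega_shift n
  have h22 : ω ^ (22 * (m : ℕ)) = -ω ^ (22 * (n : ℕ)) := by
    rw [show 22 * (m : ℕ) = 2 * m * 11 by ring, show 22 * (n : ℕ) = 2 * n * 11 by ring,
      pow_mul, h2, pow_mul _ _ 11]
    ring
  have h14 : ω ^ (14 * (m : ℕ)) = -ω ^ (14 * (n : ℕ)) := by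
    rw [show 14 * (m : ℕ) = 2 * m * 7 by ring, show 14 * (n : ℕ) = 2 * n * 7 by ring,
      pow_mul, h2, pow_mul _ _ 7]
    ring
  have h26 : ω ^ (26 * (m : ℕ)) = -ω ^ (26 * (n : ℕ)) := by
    rw [show 26 * (m : ℕ) = 2 * m * 13 by ring, show 26 * (n : ℕ) = 2 * n * 13 by ring,
      pow_mul, h2, pow_mul _ _ 13]
    ring
  have hA : -A n = A m := by simp [A, pow_add, h2, h22, h14, h26]
  have hB : -B n = B m := by simp [B, pow_add, h2, h22, h14, h26]
  have hC : -C n = C m := by simp [C, pow_add, h2, h22, h14, h26]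
  have hD : -D n = D m := by simp [D, pow_add, h2, h22, h14, h26]
  have hE : -E n = E m := by simp [E, pow_add, h2, h22, h14, h26]
  have hF : -F n = F m := by simp [F, pow_add, h2, h22, h14, h26]
  have hG : -G n = G m := by simp [G, pow_add, h2, h22, h14, h26]
  have hH : -H n = H m := by simp [H, pow_add, h2, h22, h14, h26]
  refine ⟨m, ?_⟩
  rw [← hA, ← hB, ← hC, ← hD, ← hE, ← hF, ← hG, ← hH]
  simpa only [neg_inj] using hv

end Triacontagonal
end
end
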